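/- Assume the local multiplier setup with g of the standard form, and let ε be the ball exponent of g with ε ≥ 1/2. Then there are at most finitely many unit directions v (up to sign) for which the strip exponent δ_v is less than 1/2, and every such direction v is perpendicular to one of the lines l₁,…,l_p. -/

import Mathlib

open MeasureTheory Real Set Filter Metric
open scoped Topology ENNReal

noncomputable section

/-- The Euclidean magnitude `|(x,y)| = √(x²+y²)` of a point of `ℝ²`. -/
def nrm2 (p : ℝ × ℝ) : ℝ := Real.sqrt (p.1 ^ 2 + p.2 ^ 2)

/-- The open Euclidean disk `{(x,y) : x²+y² < r²}` centered at the origin. -/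
def disk2 (r : ℝ) : Set (ℝ × ℝ) := {p : ℝ × ℝ | p.1 ^ 2 + p.2 ^ 2 < r ^ 2}

/-- The closed Euclidean disk `{(x,y) : x²+y² ≤ r²}` centered at the origin. -/
def closedDisk2 (r : ℝ) : Set (ℝ × ℝ) := {p : ℝ × ℝ | p.1 ^ 2 + p.2 ^ 2 ≤ r ^ 2}

/-- The circle `{(x,y) : x²+y² = r²}` centered at the origin. -/
def circle2 (r : ℝ) : Set (ℝ × ℝ) := {p : ℝ × ℝ | p.1 ^ 2 + p.2 ^ 2 = r ^ 2}

/-- Dot product on `ℝ²`. -/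
def dot2 (p q : ℝ × ℝ) : ℝ := p.1 * q.1 + p.2 * q.2

/-- The perpendicular vector `v^⊥ = (v₂, −v₁)`. -/
def perp2 (v : ℝ × ℝ) : ℝ × ℝ := (v.2, -v.1)

/-- The function `g = χ_E · ∏ᵢ |fᵢ|^(γᵢ)`. -/
def stdFun (n : ℕ) (f : Fin n → ℝ × ℝ → ℝ) (γ : Fin n → ℝ) (E : Set (ℝ × ℝ)) :
    ℝ × ℝ → ℝ :=
  E.indicator fun p => ∏ i, |f i p| ^ (γ i)

/-- A boundary curve for the region `E`: one half of a graph `y = h(|x|^{1/N})` or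
`x = h(|y|^{1/N})` with `h` real analytic, `h 0 = 0`, joining the origin to the circle
of radius `r₀`. -/
def IsPuiseuxBdryCurve (r₀ : ℝ) (C : Set (ℝ × ℝ)) : Prop :=
  ∃ (N : ℕ) (h : ℝ → ℝ) (I : Set ℝ) (σ : ℝ),
    0 < N ∧ (σ = 1 ∨ σ = -1) ∧ IsOpen I ∧ Icc (0:ℝ) (r₀ ^ ((N:ℝ)⁻¹)) ⊆ I ∧
    AnalyticOnNhd ℝ h I ∧ h 0 = 0 ∧
    (C = {p : ℝ × ℝ | p ∈ closedDisk2 r₀ ∧ 0 ≤ σ * p.1 ∧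
            p.2 = h (|p.1| ^ ((N:ℝ)⁻¹))} ∨
     C = {p : ℝ × ℝ | p ∈ closedDisk2 r₀ ∧ 0 ≤ σ * p.2 ∧
            p.1 = h (|p.2| ^ ((N:ℝ)⁻¹))}) ∧
    (0:ℝ×ℝ) ∈ C ∧ ∃ p ∈ C, nrm2 p = r₀

/-- The admissible form of the set `E`: either a disk centered at the origin, or a finite
disjoint union of open regions, each bounded by two Puiseux boundary curves joining the
origin to the circle of radius `r₀` together with an arc of that circle, where all the
boundary curves are pairwise disjoint in the closed disk minus the origin. -/
def IsStdDomain (E : Set (ℝ × ℝ)) : Prop :=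
  (∃ r₀ > (0:ℝ), E = disk2 r₀) ∨
  (∃ r₀ > (0:ℝ), ∃ m : ℕ, ∃ Es : Fin m → Set (ℝ × ℝ), ∃ Cs : Fin m → Fin 2 → Set (ℝ × ℝ),
    E = Set.iUnion Es ∧
    (Pairwise fun i j => Disjoint (Es i) (Es j)) ∧
    (∀ i, IsOpen (Es i) ∧ Es i ⊆ disk2 r₀ ∧ (0:ℝ×ℝ) ∈ closure (Es i) ∧
      frontier (Es i) ⊆ Cs i 0 ∪ Cs i 1 ∪ circle2 r₀) ∧
    (∀ i j, IsPuiseuxBdryCurve r₀ (Cs i j)) ∧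
    (Pairwise fun (q q' : Fin m × Fin 2) =>
      Disjoint (Cs q.1 q.2 ∩ (closedDisk2 r₀ \ {0}))
               (Cs q'.1 q'.2 ∩ (closedDisk2 r₀ \ {0}))))

/-- The standard form of the paper: the `fᵢ` are real analytic and not identically zero
near the origin, `g = χ_E ∏ |fᵢ|^(γᵢ)` is integrable near the origin, and `E` is an
admissible domain. -/
structure StandardForm (n : ℕ) (f : Fin n → ℝ × ℝ → ℝ) (γ : Fin n → ℝ)
    (E : Set (ℝ × ℝ)) : Prop where
  analytic : ∃ U ∈ 𝓝 (0 : ℝ × ℝ), ∀ i, AnalyticOnNhd ℝ (f i) U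
  nontriv : ∀ i, ¬ (∀ᶠ p in 𝓝 (0 : ℝ × ℝ), f i p = 0)
  integ : ∃ U ∈ 𝓝 (0 : ℝ × ℝ), IntegrableOn (stdFun n f γ E) U
  domain : IsStdDomain E

/-- The two-sided bound `c₁ rᵉ |log r|^d ≤ ∫_{x²+y²<r²} g ≤ c₂ rᵉ |log r|^d` for all small
`r` ("ball exponents" `ε`, `d` of `g`, as in Lemma 1.1). -/
def BallBound (g : ℝ × ℝ → ℝ) (ε : ℝ) (d : ℕ) : Prop :=
  0 < ε ∧ d ≤ 1 ∧ ∃ c₁ > (0:ℝ), ∃ c₂ > (0:ℝ), ∃ c₃ > (0:ℝ), ∀ r : ℝ, 0 < r → r < c₃ →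
    c₁ * r ^ ε * |Real.log r| ^ d ≤ (∫ p in disk2 r, g p) ∧
    (∫ p in disk2 r, g p) ≤ c₂ * r ^ ε * |Real.log r| ^ d

/-- The strip `{(x,y) : |(x,y)·v| < r, |(x,y)·v^⊥| < c}`. -/
def strip2 (v : ℝ × ℝ) (r c : ℝ) : Set (ℝ × ℝ) :=
  {p : ℝ × ℝ | |dot2 p v| < r ∧ |dot2 p (perp2 v)| < c}

/-- The two-sided bound `a r^δ |log r|^e ≤ ∫_{strip} g ≤ b r^δ |log r|^e` for all small `r`,
for every small `c` ("strip exponents" `δ_v`, `e_v` of `g` in the direction `v`, as in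
Lemma 1.2). -/
def StripBound (g : ℝ × ℝ → ℝ) (v : ℝ × ℝ) (δ : ℝ) (e : ℕ) : Prop :=
  0 < δ ∧ e ≤ 1 ∧ ∃ cv > (0:ℝ), ∀ c : ℝ, 0 < c → c < cv →
    ∃ a > (0:ℝ), ∃ b > (0:ℝ), ∀ r : ℝ, 0 < r → r < c →
      a * r ^ δ * |Real.log r| ^ e ≤ (∫ p in strip2 v r c, g p) ∧
      (∫ p in strip2 v r c, g p) ≤ b * r ^ δ * |Real.log r| ^ e

/-- The order of vanishing of `f` at the origin. -/
def vanishingOrder (f : ℝ × ℝ → ℝ) : ℕ :=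
  sInf {k : ℕ | iteratedFDeriv ℝ k f 0 ≠ 0}

/-- (A constant multiple of) the sum of the terms of lowest total degree in the Taylor
expansion of `f` at the origin, as a homogeneous function on `ℝ²`. -/
def lowestPart (f : ℝ × ℝ → ℝ) (p : ℝ × ℝ) : ℝ :=
  iteratedFDeriv ℝ (vanishingOrder f) f 0 (fun _ => p)

/-- `w` is a tangent direction of the set `C` at the origin. -/
def IsTangentDirAt (C : Set (ℝ × ℝ)) (w : ℝ × ℝ) : Prop :=
  ∃ p : ℕ → ℝ × ℝ, (∀ k, p k ∈ C ∧ p k ≠ 0) ∧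
    Tendsto p atTop (𝓝 (0:ℝ×ℝ)) ∧
    (Tendsto (fun k => (nrm2 (p k))⁻¹ • p k) atTop (𝓝 w) ∨
     Tendsto (fun k => (nrm2 (p k))⁻¹ • p k) atTop (𝓝 (-w)))

/-- `w` is the direction of one of the lines `l₁, …, l_p`: a line through the origin in the
zero set of the lowest-degree Taylor part of some `fᵢ`, or a tangent line at the origin to
one of the boundary curves of `E`. -/
def ExceptionalDir (n : ℕ) (f : Fin n → ℝ × ℝ → ℝ) (E : Set (ℝ × ℝ)) (w : ℝ × ℝ) : Prop :=
  (∃ i, lowestPart (f i) w = 0) ∨ IsTangentDirAt (frontier E) w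

/-- Conditions (1.2)-(1.3) on the factor `α`: `C¹` away from the origin, bounded by `A`,
with gradient bounded by `A (x²+y²)^{-1/2}`. -/
def AlphaBound (α : ℝ × ℝ → ℝ) (A : ℝ) : Prop :=
  ContDiffOn ℝ 1 α {(0:ℝ×ℝ)}ᶜ ∧ (∀ p, |α p| ≤ A) ∧
  ∀ p : ℝ × ℝ, p ≠ 0 → ‖fderiv ℝ α p‖ ≤ A * (nrm2 p)⁻¹

/-- A smooth bump function equal to `1` near `(x₀, y₀)`, supported within (Euclidean)
distance `r` of `(x₀, y₀)`. -/
def IsBump (φ : ℝ × ℝ → ℝ) (x₀ y₀ : ℝ) (r : ℝ) : Prop :=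
  ContDiff ℝ (⊤ : ℕ∞) φ ∧ HasCompactSupport φ ∧ (∀ᶠ p in 𝓝 ((x₀, y₀) : ℝ × ℝ), φ p = 1) ∧
    tsupport φ ⊆ {p : ℝ × ℝ | (p.1 - x₀) ^ 2 + (p.2 - y₀) ^ 2 < r ^ 2}

/-- The oscillatory integral `∫_S h(x,y) e^{i(tx+uy)} dx dy`. -/
def oscInt (h : ℝ × ℝ → ℝ) (S : Set (ℝ × ℝ)) (t u : ℝ) : ℂ :=
  ∫ p in S, (h p : ℂ) * Complex.exp (Complex.I * ((t : ℂ) * (p.1 : ℂ) + (u : ℂ) * (p.2 : ℂ)))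

/-- The convolution kernel `K(t,u) = ∫ m(x,y) e^{i(tx+uy)} dx dy`. -/
def Kfull (m : ℝ × ℝ → ℝ) (t u : ℝ) : ℂ :=
  oscInt m Set.univ t u

/-- The localized kernel `K_φ(t,u) = ∫ φ(x,y) m(x,y) e^{i(tx+uy)} dx dy`. -/
def Kphi (φ m : ℝ × ℝ → ℝ) (t u : ℝ) : ℂ :=
  oscInt (fun p => φ p * m p) Set.univ t u

/-- `k` is a Puiseux function of index `N` on `[0,a]`: `k(x) = k'(x^{1/N})` for a function
`k'` real analytic on an open set containing `[0, a^{1/N}]`; equivalently `x ↦ k(x^N)` is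
real analytic. -/
def PuiseuxOn (N : ℕ) (a : ℝ) (k : ℝ → ℝ) : Prop :=
  ∃ (k' : ℝ → ℝ) (I : Set ℝ), IsOpen I ∧ Icc (0:ℝ) (a ^ ((N:ℝ)⁻¹)) ⊆ I ∧
    AnalyticOnNhd ℝ k' I ∧ ∀ x ∈ Icc (0:ℝ) a, k x = k' (x ^ ((N:ℝ)⁻¹))

/-- `k(x) = l·x^s + higher order terms` as `x → 0⁺`. -/
def LeadingTerm (k : ℝ → ℝ) (l s : ℝ) : Prop :=
  Tendsto (fun x => k x / x ^ s) (𝓝[>] (0:ℝ)) (𝓝 l)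

/-- The mixed partial derivative `∂_x^l ∂_y^m F`. -/
def pderiv2 (l m : ℕ) (F : ℝ × ℝ → ℝ) (p : ℝ × ℝ) : ℝ :=
  iteratedDeriv l (fun x => iteratedDeriv m (fun y => F (x, y)) p.2) p.1

/-- The descending product `α(α−1)⋯(α−l+1)`. -/
def descProd (α : ℝ) (l : ℕ) : ℝ := ∏ j ∈ Finset.range l, (α - (j : ℝ))

/-- The sliver `{(x,y) : 0 < x < a, g(x) < y < G(x)}`. -/
def sliverSet (a : ℝ) (g G : ℝ → ℝ) : Set (ℝ × ℝ) :=
  {q : ℝ × ℝ | 0 < q.1 ∧ q.1 < a ∧ g q.1 < q.2 ∧ q.2 < G q.1}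

/-- A wedge of radius `r₀` at the origin: a region bounded by two lines through the origin
and the circle of radius `r₀`. -/
def IsWedge (r₀ : ℝ) (W : Set (ℝ × ℝ)) : Prop :=
  ∃ θ₁ θ₂ : ℝ, θ₁ < θ₂ ∧ θ₂ ≤ θ₁ + 2 * π ∧
    W = {p : ℝ × ℝ | ∃ ρ θ : ℝ, 0 < ρ ∧ ρ < r₀ ∧ θ₁ < θ ∧ θ < θ₂ ∧
      p = (ρ * Real.cos θ, ρ * Real.sin θ)}


/-- local data of an analytic germ -/
lemma germ_data (f : ℝ × ℝ → ℝ) (hf : AnalyticAt ℝ f 0)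
    (hne : ¬ (∀ᶠ p in 𝓝 (0 : ℝ × ℝ), f p = 0)) :
    (∃ y, lowestPart f y ≠ 0) ∧
    ∃ c : ℝ, 0 < c ∧
      (fun y => f y - c * lowestPart f y) =O[𝓝 0]
        fun y => ‖y‖ ^ (vanishingOrder f + 1) := by
  obtain ⟨p, r, hp⟩ := hf
  have hdiag : ∀ n y, (n.factorial : ℝ) * p n (fun _ => y)
      = iteratedFDeriv ℝ n f 0 (fun _ => y) := by
    intro n y
    have := hp.factorial_smul y n
    rw [← this, nsmul_eq_mul]
  have hex : ∃ k, iteratedFDeriv ℝ k f 0 ≠ 0 := by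
    by_contra! h
    apply hne
    have h0 : ∀ n y, p n (fun _ => y) = 0 := by
      intro n y
      have := hdiag n y
      rw [h n] at this
      simpa [Nat.factorial_ne_zero] using this
    have hball : Metric.eball (0 : ℝ × ℝ) r ∈ 𝓝 (0 : ℝ × ℝ) :=
      Metric.eball_mem_nhds _ hp.r_pos
    filter_upwards [hball] with y hy
    have hs := hp.hasSum hy
    simp only [h0, zero_add] at hs
    exact hs.unique hasSum_zero
  have hk : iteratedFDeriv ℝ (vanishingOrder f) f 0 ≠ 0 := by
    have := Nat.sInf_mem (s := {k : ℕ | iteratedFDeriv ℝ k f 0 ≠ 0}) hex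
    exact this
  have hlt : ∀ j < vanishingOrder f, iteratedFDeriv ℝ j f 0 = 0 := by
    intro j hj
    have := Nat.notMem_of_lt_sInf hj
    simpa using this
  set k := vanishingOrder f with hkdef
  constructor
  · by_contra! h
    apply hk
    have h0 : ∀ y, p k (fun _ => y) = 0 := by
      intro y
      have := hdiag k y
      have h2 : iteratedFDeriv ℝ k f 0 (fun _ => y) = 0 := h y
      rw [h2] at this
      simpa [Nat.factorial_ne_zero] using this
    ext v
    rw [hp.iteratedFDeriv_eq_sum_of_completeSpace, ← (p k).iteratedFDeriv_comp_diagonal 0 v]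
    have : (fun x : ℝ × ℝ => p k (fun _ => x)) = 0 := by
      funext x; exact h0 x
    rw [this]
    simp
  · refine ⟨(k.factorial : ℝ)⁻¹, by positivity, ?_⟩
    have := hp.hasFPowerSeriesAt.isBigO_sub_partialSum_pow (k+1)
    refine this.congr_left ?_
    intro y
    simp only [zero_add, FormalMultilinearSeries.partialSum]
    rw [Finset.sum_range_succ, Finset.sum_eq_zero, zero_add]
    · congr 1
      have h1 := hdiag k y
      have h2 : lowestPart f y = iteratedFDeriv ℝ k f 0 (fun _ => y) := rfl
      rw [h2, ← h1]
      field_simp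
    · intro j hj
      have := hdiag j y
      rw [hlt j (by simpa using hj)] at this
      simpa [Nat.factorial_ne_zero] using this

lemma lowestPart_smul (f : ℝ × ℝ → ℝ) (b : ℝ) (y : ℝ × ℝ) :
    lowestPart f (b • y) = b ^ vanishingOrder f * lowestPart f y := by
  unfold lowestPart
  have := (iteratedFDeriv ℝ (vanishingOrder f) f 0).map_smul_univ (fun _ => b) (fun _ => y)
  simpa using this

lemma lowestPart_analytic (f : ℝ × ℝ → ℝ) (y : ℝ × ℝ) : AnalyticAt ℝ (lowestPart f) y := by
  have h1 := (iteratedFDeriv ℝ (vanishingOrder f) f 0).analyticAt (x := fun _ => y)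
  have h2 : AnalyticAt ℝ (fun y : ℝ × ℝ => (fun _ : Fin (vanishingOrder f) => y)) y :=
    AnalyticAt.pi fun _ => analyticAt_id
  exact AnalyticAt.comp (g := ⇑(iteratedFDeriv ℝ (vanishingOrder f) f 0))
    (f := fun y : ℝ × ℝ => (fun _ : Fin (vanishingOrder f) => y)) h1 h2

/-- two sided bound in a half cone -/
lemma cone_bound (f : ℝ × ℝ → ℝ) (hf : AnalyticAt ℝ f 0)
    (hne : ¬ (∀ᶠ p in 𝓝 (0 : ℝ × ℝ), f p = 0)) (w v : ℝ × ℝ) (hw : lowestPart f w ≠ 0) :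
    ∃ η > (0:ℝ), ∃ m > (0:ℝ), ∃ M > (0:ℝ), ∀ a b : ℝ, 0 < b → b < η → |a| ≤ η * b →
      m * b ^ vanishingOrder f ≤ |f (b • w + a • v)| ∧
      |f (b • w + a • v)| ≤ M * b ^ vanishingOrder f := by
  obtain ⟨-, c, hc, hO⟩ := germ_data f hf hne
  set k := vanishingOrder f
  obtain ⟨C, hC0, hC⟩ := hO.exists_pos
  rw [Asymptotics.IsBigOWith] at hC
  obtain ⟨ρ, hρ, hC⟩ := Metric.eventually_nhds_iff.1 hC
  set L := |lowestPart f w| with hL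
  have hLpos : 0 < L := abs_pos.2 hw
  -- continuity
  have hcont : Tendsto (fun τ : ℝ => |lowestPart f (w + τ • v)|) (𝓝 0) (𝓝 L) := by
    have h1 : ContinuousAt (fun τ : ℝ => |lowestPart f (w + τ • v)|) 0 := by
      apply ContinuousAt.abs
      apply ContinuousAt.comp (g := lowestPart f) (f := fun τ : ℝ => w + τ • v)
      · exact (lowestPart_analytic f _).continuousAt
      · fun_prop
    have := h1.tendsto
    simpa [hL] using this
  have hev : ∀ᶠ τ : ℝ in 𝓝 0, L / 2 < |lowestPart f (w + τ • v)| ∧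
      |lowestPart f (w + τ • v)| < 2 * L :=
    (hcont.eventually (lt_mem_nhds (by linarith))).and
      (hcont.eventually (gt_mem_nhds (by linarith)))
  obtain ⟨η₁, hη₁, hτ⟩ := Metric.eventually_nhds_iff.1 hev
  set B := ‖w‖ + ‖v‖ + 1 with hB
  have hBpos : 0 < B := by positivity
  set D := C * B ^ (k+1) with hD
  have hDpos : 0 < D := by positivity
  refine ⟨min (min 1 (η₁/2)) (min (ρ / (2*B)) (c * L / (4 * D))), by positivity,
    c * L / 4, by positivity, 2 * c * L + D, by positivity, ?_⟩
  intro a b hb hbη haη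
  have hη1 : b < 1 := lt_of_lt_of_le hbη ((min_le_left _ _).trans (min_le_left _ _))
  have hη3 : b < ρ / (2*B) := lt_of_lt_of_le hbη ((min_le_right _ _).trans (min_le_left _ _))
  have hη4 : b < c * L / (4 * D) :=
    lt_of_lt_of_le hbη ((min_le_right _ _).trans (min_le_right _ _))
  have ha1 : |a| ≤ b := haη.trans (by
    have : min (min 1 (η₁/2)) (min (ρ / (2*B)) (c * L / (4 * D))) ≤ 1 :=
      (min_le_left _ _).trans (min_le_left _ _)
    nlinarith)
  have ha2 : |a| ≤ η₁ / 2 * b := haη.trans (by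
    have : min (min 1 (η₁/2)) (min (ρ / (2*B)) (c * L / (4 * D))) ≤ η₁/2 :=
      (min_le_left _ _).trans (min_le_right _ _)
    nlinarith)
  have hnorm : ‖b • w + a • v‖ ≤ b * B := by
    calc ‖b • w + a • v‖ ≤ ‖b • w‖ + ‖a • v‖ := norm_add_le _ _
      _ = b * ‖w‖ + |a| * ‖v‖ := by
        rw [norm_smul, norm_smul, Real.norm_eq_abs, Real.norm_eq_abs, abs_of_pos hb]
      _ ≤ b * ‖w‖ + b * ‖v‖ := by gcongr
      _ ≤ b * B := by rw [hB]; nlinarith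
  have h1 := hC (y := b • w + a • v) (by
    rw [dist_zero_right]
    refine hnorm.trans_lt ?_
    rw [lt_div_iff₀ (by positivity)] at hη3
    nlinarith)
  have h2 : ‖f (b • w + a • v) - c * lowestPart f (b • w + a • v)‖ ≤ D * b * b ^ k := by
    refine h1.trans ?_
    rw [norm_pow, norm_norm]
    calc C * ‖b • w + a • v‖ ^ (k+1) ≤ C * (b * B) ^ (k+1) := by gcongr
      _ = D * b * b ^ k := by rw [hD]; ring
  have h3 : lowestPart f (b • w + a • v) = b ^ k * lowestPart f (w + (a/b) • v) := by
    rw [← lowestPart_smul, smul_add, smul_smul, mul_div_cancel₀ _ hb.ne']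
  obtain ⟨h4, h5⟩ := hτ (y := a/b) (by
    rw [dist_zero_right, Real.norm_eq_abs, abs_div, abs_of_pos hb, div_lt_iff₀ hb]
    nlinarith)
  have hbk : 0 < b ^ k := by positivity
  have h6 : |c * lowestPart f (b • w + a • v)| = c * |lowestPart f (w + (a/b) • v)| * b ^ k := by
    rw [h3, abs_mul, abs_mul, abs_of_pos hc, abs_of_pos hbk]; ring
  have h7 : D * b ≤ c * L / 4 := by
    rw [lt_div_iff₀ (by positivity)] at hη4
    nlinarith
  rw [Real.norm_eq_abs] at h2
  set X := f (b • w + a • v)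
  set Y := c * lowestPart f (b • w + a • v)
  have h8 := abs_sub_abs_le_abs_sub X Y
  have h9 := abs_sub_abs_le_abs_sub Y X
  rw [abs_sub_comm Y X] at h9
  have h10 : c * (L/2) * b ^ k ≤ |Y| := by rw [h6]; gcongr
  have h11 : |Y| ≤ c * (2 * L) * b ^ k := by rw [h6]; gcongr
  have h12 : D * b * b ^ k ≤ c * L / 4 * b ^ k := by gcongr
  have h13 : D * b * b ^ k ≤ D * b ^ k := by
    have : D * b ≤ D := by nlinarith
    gcongr
  constructor
  · nlinarith
  · nlinarith

lemma cos_sin_of_nrm2 (v : ℝ × ℝ) (hv : nrm2 v = 1) :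
    ∃ θ ∈ Icc (0:ℝ) (2 * π), v = (Real.cos θ, Real.sin θ) := by
  have h : v.1 ^ 2 + v.2 ^ 2 = 1 := by
    have := congrArg (· ^ 2) hv
    simp only [nrm2] at this
    rw [Real.sq_sqrt (by positivity)] at this
    simpa using this
  set z : ℂ := ⟨v.1, v.2⟩ with hz
  have hn : ‖z‖ = 1 := by
    rw [Complex.norm_def, Complex.normSq_apply]
    simp only [hz]
    rw [show v.1 * v.1 + v.2 * v.2 = 1 by nlinarith]; simp
  have hz0 : z ≠ 0 := by intro h0; rw [h0] at hn; simp at hn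
  have hc := Complex.cos_arg hz0
  have hs := Complex.sin_arg z
  rw [hn] at hc hs
  simp only [div_one] at hc hs
  obtain ⟨θ, hθ, heq⟩ : ∃ θ ∈ Icc (0:ℝ) (2*π), Real.cos θ = Real.cos z.arg ∧
      Real.sin θ = Real.sin z.arg := by
    by_cases h0 : 0 ≤ z.arg
    · exact ⟨z.arg, ⟨h0, by linarith [Complex.arg_le_pi z, Real.pi_pos]⟩, rfl, rfl⟩
    · refine ⟨z.arg + 2 * π, ⟨by linarith [Complex.neg_pi_lt_arg z, Real.pi_pos],
        by linarith⟩, Real.cos_add_two_pi _, Real.sin_add_two_pi _⟩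
  refine ⟨θ, hθ, ?_⟩
  rw [heq.1, heq.2, hc, hs]

lemma finite_zero_dirs (f : ℝ × ℝ → ℝ) (hf : AnalyticAt ℝ f 0)
    (hne : ¬ (∀ᶠ p in 𝓝 (0 : ℝ × ℝ), f p = 0)) :
    {w : ℝ × ℝ | nrm2 w = 1 ∧ lowestPart f w = 0}.Finite := by
  obtain ⟨⟨y, hy⟩, -⟩ := germ_data f hf hne
  set F : ℝ → ℝ := fun θ => lowestPart f (Real.cos θ, Real.sin θ) with hF
  have hFa : AnalyticOnNhd ℝ F univ := by
    intro θ _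
    apply AnalyticAt.fun_comp (g := lowestPart f) (f := fun θ : ℝ => (Real.cos θ, Real.sin θ))
    · exact lowestPart_analytic f _
    · exact (Real.analyticAt_cos).prod (Real.analyticAt_sin)
  have hfin : ({θ | F θ = 0} ∩ Icc (0:ℝ) (2 * π)).Finite := by
    by_contra hinf
    have hinf : ({θ | F θ = 0} ∩ Icc (0:ℝ) (2 * π)).Infinite := hinf
    obtain ⟨x, -, hx⟩ := hinf.exists_accPt_of_subset_isCompact isCompact_Icc inter_subset_right
    have hfr : ∃ᶠ z in 𝓝[≠] x, F z = 0 := by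
      rw [accPt_iff_frequently_nhdsNE] at hx
      exact hx.mono fun z hz => hz.1
    have hzero := hFa.eqOn_zero_of_preconnected_of_frequently_eq_zero isPreconnected_univ
      (mem_univ x) hfr
    by_cases hn : nrm2 y = 0
    · have : y = 0 := by
        have h1 : y.1 ^ 2 + y.2 ^ 2 = 0 := by
          rw [nrm2, Real.sqrt_eq_zero (by positivity)] at hn; exact hn
        ext
        · have : y.1 ^ 2 = 0 := by nlinarith [sq_nonneg y.1, sq_nonneg y.2]
          simpa using this
        · have : y.2 ^ 2 = 0 := by nlinarith [sq_nonneg y.1, sq_nonneg y.2]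
          simpa using this
      have h0 : lowestPart f (0 : ℝ × ℝ) = 0 ∨ ∀ z, lowestPart f z = lowestPart f 0 := by
        by_cases hk : vanishingOrder f = 0
        · right
          intro z
          have := lowestPart_smul f 0 z
          rw [hk] at this
          simpa using this.symm
        · left
          have := lowestPart_smul f 0 0
          simpa [hk] using this
      rcases h0 with h0 | h0
      · rw [this] at hy; exact hy h0
      · have h1 : F 0 = 0 := hzero (mem_univ _)
        rw [hF] at h1
        simp only [] at h1
        rw [h0] at h1
        rw [this] at hy; exact hy h1
    · have hpos : 0 < nrm2 y := lt_of_le_of_ne (Real.sqrt_nonneg _) (Ne.symm hn)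
      have hunit : nrm2 ((nrm2 y)⁻¹ • y) = 1 := by
        have h2 : nrm2 y ^ 2 = y.1 ^ 2 + y.2 ^ 2 := Real.sq_sqrt (by positivity)
        have : ((nrm2 y)⁻¹ • y).1 ^ 2 + ((nrm2 y)⁻¹ • y).2 ^ 2 = 1 := by
          simp only [Prod.smul_fst, Prod.smul_snd, smul_eq_mul]
          field_simp
          exact h2.symm
        rw [nrm2, this, Real.sqrt_one]
      obtain ⟨θ, -, hθ⟩ := cos_sin_of_nrm2 _ hunit
      have h1 : F θ = 0 := hzero (mem_univ _)
      rw [hF] at h1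
      simp only [] at h1
      rw [← hθ, lowestPart_smul] at h1
      rcases mul_eq_zero.1 h1 with h | h
      · exact absurd h (pow_ne_zero _ (inv_ne_zero hn))
      · exact hy h
  refine (hfin.image (fun θ => ((Real.cos θ, Real.sin θ) : ℝ × ℝ))).subset ?_
  rintro w ⟨hw, hw0⟩
  obtain ⟨θ, hθ, rfl⟩ := cos_sin_of_nrm2 w hw
  exact ⟨θ, ⟨hw0, hθ⟩, rfl⟩

/-- normalization -/
def nml (p : ℝ × ℝ) : ℝ × ℝ := (nrm2 p)⁻¹ • p

lemma nrm2_pos {p : ℝ × ℝ} (hp : p ≠ 0) : 0 < nrm2 p := by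
  apply Real.sqrt_pos.2
  by_contra h
  apply hp
  have h1 : p.1 ^ 2 + p.2 ^ 2 ≤ 0 := not_lt.1 h
  ext
  · have : p.1 ^ 2 = 0 := by nlinarith [sq_nonneg p.1, sq_nonneg p.2]
    simpa using this
  · have : p.2 ^ 2 = 0 := by nlinarith [sq_nonneg p.1, sq_nonneg p.2]
    simpa using this

lemma nrm2_cont : Continuous nrm2 := by unfold nrm2; fun_prop

lemma nml_cont {p : ℝ × ℝ} (hp : p ≠ 0) : ContinuousAt nml p := by
  unfold nml
  exact (nrm2_cont.continuousAt.inv₀ (nrm2_pos hp).ne').smul continuousAt_id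

lemma nrm2_smul {s : ℝ} (hs : 0 < s) (p : ℝ × ℝ) : nrm2 (s • p) = s * nrm2 p := by
  unfold nrm2
  simp only [Prod.smul_fst, Prod.smul_snd, smul_eq_mul]
  rw [show (s * p.1) ^ 2 + (s * p.2) ^ 2 = s ^ 2 * (p.1 ^ 2 + p.2 ^ 2) by ring,
    Real.sqrt_mul (by positivity), Real.sqrt_sq hs.le]

lemma nml_smul {s : ℝ} (hs : 0 < s) (p : ℝ × ℝ) : nml (s • p) = nml p := by
  unfold nml
  rw [nrm2_smul hs, smul_smul]
  congr 1
  rw [mul_inv, mul_assoc, mul_comm, mul_assoc, mul_inv_cancel₀ hs.ne', mul_one]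

lemma nml_tendsto (p q : ℝ → ℝ × ℝ) (j : ℕ) (hq : ContinuousAt q 0) (h0 : q 0 ≠ 0)
    (h : ∀ᶠ t in 𝓝[>] (0:ℝ), p t = t ^ j • q t) :
    Tendsto (fun t => nml (p t)) (𝓝[>] 0) (𝓝 (nml (q 0))) := by
  have h1 : Tendsto (fun t => nml (q t)) (𝓝[>] 0) (𝓝 (nml (q 0))) :=
    ((nml_cont h0).tendsto.comp hq.tendsto).mono_left nhdsWithin_le_nhds
  refine h1.congr' ?_
  filter_upwards [h, self_mem_nhdsWithin] with t ht htpos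
  rw [ht, nml_smul (pow_pos htpos j)]

lemma curve_dir (N : ℕ) (h : ℝ → ℝ) (σ : ℝ) (hσ : σ ≠ 0) (hh : AnalyticAt ℝ h 0) :
    ∃ w1 w2 : ℝ × ℝ, Tendsto (fun t : ℝ => nml (σ * t ^ N, h t)) (𝓝[>] 0) (𝓝 w1) ∧
      Tendsto (fun t : ℝ => nml (h t, σ * t ^ N)) (𝓝[>] 0) (𝓝 w2) := by
  by_cases hz : ∀ᶠ t in 𝓝 (0:ℝ), h t = 0
  · refine ⟨_, _, nml_tendsto _ (fun _ => (σ, 0)) N continuousAt_const ?_ ?_,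
      nml_tendsto _ (fun _ => (0, σ)) N continuousAt_const ?_ ?_⟩
    · simp [hσ]
    · filter_upwards [nhdsWithin_le_nhds hz] with t ht
      simp [ht, mul_comm]
    · simp [hσ]
    · filter_upwards [nhdsWithin_le_nhds hz] with t ht
      simp [ht, mul_comm]
  · obtain ⟨m, u, hu, hu0, hev⟩ := hh.exists_eventuallyEq_pow_smul_nonzero_iff.2 hz
    simp only [sub_zero, smul_eq_mul] at hev
    have huc := hu.continuousAt
    rcases le_total N m with hNm | hNm
    · obtain ⟨l, rfl⟩ := Nat.exists_eq_add_of_le hNm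
      refine ⟨_, _, nml_tendsto _ (fun t => (σ, t ^ l * u t)) N (by fun_prop) ?_ ?_,
        nml_tendsto _ (fun t => (t ^ l * u t, σ)) N (by fun_prop) ?_ ?_⟩
      · simp [hσ]
      · filter_upwards [nhdsWithin_le_nhds hev] with t ht
        rw [ht]; ext <;> simp <;> ring
      · simp [hσ]
      · filter_upwards [nhdsWithin_le_nhds hev] with t ht
        rw [ht]; ext <;> simp <;> ring
    · obtain ⟨l, rfl⟩ := Nat.exists_eq_add_of_le hNm
      refine ⟨_, _, nml_tendsto _ (fun t => (σ * t ^ l, u t)) m (by fun_prop) ?_ ?_,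
        nml_tendsto _ (fun t => (u t, σ * t ^ l)) m (by fun_prop) ?_ ?_⟩
      · simp [hu0]
      · filter_upwards [nhdsWithin_le_nhds hev] with t ht
        rw [ht]; ext <;> simp <;> ring
      · simp [hu0]
      · filter_upwards [nhdsWithin_le_nhds hev] with t ht
        rw [ht]; ext <;> simp <;> ring

lemma sig_aux (N : ℕ) (hN : 0 < N) (σ x : ℝ) (hσ : σ = 1 ∨ σ = -1) (h : 0 ≤ σ * x) :
    x = σ * (|x| ^ ((N:ℝ)⁻¹)) ^ N := by
  rw [Real.rpow_inv_natCast_pow (abs_nonneg x) hN.ne']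
  rcases hσ with rfl | rfl
  · rw [abs_of_nonneg (by linarith)]; ring
  · rw [abs_of_nonpos (by linarith)]; ring

lemma root_tendsto (N : ℕ) (hN : 0 < N) {α : Type*} (l : Filter α) (x : α → ℝ)
    (hx : Tendsto x l (𝓝 0)) (hne : ∀ᶠ a in l, x a ≠ 0) :
    Tendsto (fun a => |x a| ^ ((N:ℝ)⁻¹)) l (𝓝[>] 0) := by
  have hN' : (0:ℝ) < (N:ℝ)⁻¹ := by positivity
  apply tendsto_nhdsWithin_iff.2
  constructor
  · have h1 : Continuous (fun y : ℝ => |y| ^ ((N:ℝ)⁻¹)) :=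
      continuous_abs.rpow_const fun _ => Or.inr hN'.le
    have h2 := (h1.tendsto 0).comp hx
    simpa [Real.zero_rpow hN'.ne', Function.comp_def] using h2
  · filter_upwards [hne] with a ha
    exact Real.rpow_pos_of_pos (abs_pos.2 ha) _

lemma puiseux_dir (r₀ : ℝ) (C : Set (ℝ × ℝ)) (hr : 0 < r₀) (hC : IsPuiseuxBdryCurve r₀ C) :
    ∃ w, Tendsto nml (𝓝[C \ {0}] 0) (𝓝 w) := by
  obtain ⟨N, h, I, σ, hN, hσ, -, hI, hh, h0, hC, -, -⟩ := hC
  have hσ0 : σ ≠ 0 := by rcases hσ with rfl | rfl <;> norm_num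
  have hN' : ((N:ℝ)⁻¹) ≠ 0 := by positivity
  obtain ⟨w1, w2, hw1, hw2⟩ := curve_dir N h σ hσ0
    (hh 0 (hI ⟨le_rfl, Real.rpow_nonneg hr.le _⟩))
  have hid : Tendsto (fun p : ℝ × ℝ => p) (𝓝[C \ {0}] 0) (𝓝 0) :=
    tendsto_id.mono_left nhdsWithin_le_nhds
  have hf1 : Tendsto (fun p : ℝ × ℝ => p.1) (𝓝[C \ {0}] 0) (𝓝 0) :=
    (continuous_fst.tendsto (0 : ℝ × ℝ)).comp hid
  have hf2 : Tendsto (fun p : ℝ × ℝ => p.2) (𝓝[C \ {0}] 0) (𝓝 0) :=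
    (continuous_snd.tendsto (0 : ℝ × ℝ)).comp hid
  rcases hC with hC | hC
  · refine ⟨w1, ?_⟩
    have hne : ∀ᶠ p : ℝ × ℝ in 𝓝[C \ {0}] 0, p.1 ≠ 0 := by
      filter_upwards [self_mem_nhdsWithin] with p hp h1
      rw [hC] at hp
      apply hp.2
      have h2 := hp.1.2.2
      rw [h1, abs_zero, Real.zero_rpow hN', h0] at h2
      exact Prod.ext h1 h2
    have := hw1.comp (root_tendsto N hN _ _ hf1 hne)
    refine this.congr' ?_
    filter_upwards [self_mem_nhdsWithin] with p hp
    rw [hC] at hp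
    simp only [Function.comp]
    rw [← sig_aux N hN σ p.1 hσ hp.1.2.1, ← hp.1.2.2]
  · refine ⟨w2, ?_⟩
    have hne : ∀ᶠ p : ℝ × ℝ in 𝓝[C \ {0}] 0, p.2 ≠ 0 := by
      filter_upwards [self_mem_nhdsWithin] with p hp h1
      rw [hC] at hp
      apply hp.2
      have h2 := hp.1.2.2
      rw [h1, abs_zero, Real.zero_rpow hN', h0] at h2
      exact Prod.ext h2 h1
    have := hw2.comp (root_tendsto N hN _ _ hf2 hne)
    refine this.congr' ?_
    filter_upwards [self_mem_nhdsWithin] with p hp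
    rw [hC] at hp
    simp only [Function.comp]
    rw [← sig_aux N hN σ p.2 hσ hp.1.2.1, ← hp.1.2.2]

lemma circle_far (r₀ : ℝ) (hr : 0 < r₀) : ∀ᶠ p in 𝓝 (0 : ℝ × ℝ), p ∉ circle2 r₀ := by
  have h1 : Continuous (fun p : ℝ × ℝ => p.1 ^ 2 + p.2 ^ 2) := by fun_prop
  have h2 := h1.tendsto 0
  have h3 : ((0:ℝ×ℝ).1 ^ 2 + (0:ℝ×ℝ).2 ^ 2 : ℝ) < r₀ ^ 2 := by simp; positivity
  filter_upwards [h2.eventually (gt_mem_nhds h3)] with p hp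
  exact hp.ne

lemma frontier_dirs (E : Set (ℝ × ℝ)) (hE : IsStdDomain E) :
    ∃ S : Set (ℝ × ℝ), S.Finite ∧ ∀ V ∈ 𝓝ˢ S, ∀ᶠ p in 𝓝 (0 : ℝ × ℝ),
      p ∈ frontier E → p ≠ 0 → nml p ∈ V := by
  rcases hE with ⟨r₀, hr, rfl⟩ | ⟨r₀, hr, m, Es, Cs, rfl, -, hEs, hCs, -⟩
  · refine ⟨∅, Set.finite_empty, fun V _ => ?_⟩
    filter_upwards [circle_far r₀ hr] with p hp hpf
    exact absurd (frontier_lt_subset_eq (by fun_prop) (by fun_prop) hpf) hp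
  · choose w hw using fun q : Fin m × Fin 2 => puiseux_dir r₀ (Cs q.1 q.2) hr (hCs q.1 q.2)
    refine ⟨Set.range w, Set.finite_range w, fun V hV => ?_⟩
    have h1 : ∀ᶠ p in 𝓝 (0 : ℝ × ℝ), ∀ q : Fin m × Fin 2, p ∈ Cs q.1 q.2 \ {0} → nml p ∈ V := by
      rw [Filter.eventually_all]
      intro q
      have hVq : V ∈ 𝓝 (w q) := (mem_nhdsSet_iff_forall.1 hV) _ ⟨q, rfl⟩
      exact eventually_nhdsWithin_iff.1 ((hw q).eventually hVq)
    filter_upwards [h1, circle_far r₀ hr] with p hp hpc hpf hp0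
    have hpi : ∃ i, p ∈ frontier (Es i) := by
      rw [frontier, closure_iUnion_of_finite] at hpf
      obtain ⟨i, hi⟩ := mem_iUnion.1 hpf.1
      refine ⟨i, hi, fun hint => hpf.2 ?_⟩
      exact interior_mono (subset_iUnion Es i) hint
    obtain ⟨i, hi⟩ := hpi
    rcases (hEs i).2.2.2 hi with (h | h) | h
    · exact hp (i, 0) ⟨h, hp0⟩
    · exact hp (i, 1) ⟨h, hp0⟩
    · exact absurd h hpc

lemma finite_tangent (E : Set (ℝ × ℝ)) (hE : IsStdDomain E) :
    {w | IsTangentDirAt (frontier E) w}.Finite := by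
  obtain ⟨S, hS, hV⟩ := frontier_dirs E hE
  have key : ∀ (p : ℕ → ℝ × ℝ) (w : ℝ × ℝ), (∀ k, p k ∈ frontier E ∧ p k ≠ 0) →
      Tendsto p atTop (𝓝 0) → Tendsto (fun k => (nrm2 (p k))⁻¹ • p k) atTop (𝓝 w) → w ∈ S := by
    intro p w hp hp0 hpw
    by_contra hwS
    have hU : Sᶜ ∈ 𝓝 w := hS.isClosed.isOpen_compl.mem_nhds hwS
    obtain ⟨K, hK, hKc, hKS⟩ := exists_mem_nhds_isClosed_subset hU
    have h1 : Kᶜ ∈ 𝓝ˢ S := hKc.isOpen_compl.mem_nhdsSet.2 (fun x hx hxK => hKS hxK hx)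
    have h2 := hp0.eventually (hV _ h1)
    have h3 := hpw.eventually hK
    obtain ⟨k, hk1, hk2⟩ := (h2.and h3).exists
    exact hk1 (hp k).1 (hp k).2 hk2
  refine (hS.union (hS.image Neg.neg)).subset ?_
  rintro w ⟨p, hp, hp0, h | h⟩
  · exact Or.inl (key p w hp hp0 h)
  · exact Or.inr ⟨-w, key p (-w) hp hp0 h, by simp⟩

lemma cone_avoid (F : Set (ℝ × ℝ)) (w v : ℝ × ℝ) (hw : nrm2 w = 1) (hwv : dot2 w v = 0)
    (ht : ¬ IsTangentDirAt F w) :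
    ∃ η > (0:ℝ), ∀ a b : ℝ, 0 < b → b < η → |a| ≤ η * b → b • w + a • v ∉ F := by
  by_contra! h
  apply ht
  have hη : ∀ k : ℕ, 0 < (1 / ((k:ℝ) + 1)) := fun k => by positivity
  choose a b hb hbη ha hF using fun k : ℕ => h (1 / ((k:ℝ) + 1)) (hη k)
  have hlim := tendsto_one_div_add_atTop_nhds_zero_nat (𝕜 := ℝ)
  have hb0 : Tendsto b atTop (𝓝 0) :=
    squeeze_zero (fun k => (hb k).le) (fun k => (hbη k).le) hlim
  have hτ : Tendsto (fun k => a k / b k) atTop (𝓝 0) := by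
    refine squeeze_zero_norm (fun k => ?_) hlim
    rw [Real.norm_eq_abs, abs_div, abs_of_pos (hb k), div_le_iff₀ (hb k)]
    exact ha k
  have hw0 : w ≠ 0 := by
    rintro rfl
    simp [nrm2] at hw
  have heq : ∀ k, b k • w + a k • v = b k • (w + (a k / b k) • v) := by
    intro k
    rw [smul_add, smul_smul, mul_div_cancel₀ _ (hb k).ne']
  have hwτ : Tendsto (fun k => w + (a k / b k) • v) atTop (𝓝 w) := by
    have := (tendsto_const_nhds (x := w)).add (hτ.smul_const v)
    simpa using this
  refine ⟨fun k => b k • w + a k • v, fun k => ⟨hF k, ?_⟩, ?_, Or.inl ?_⟩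
  · intro h0
    beta_reduce at h0
    have h1 : dot2 (b k • w + a k • v) w = 0 := by rw [h0]; simp [dot2]
    have h2 : w.1 ^ 2 + w.2 ^ 2 = 1 := by
      have := congrArg (· ^ 2) hw
      simp only [nrm2] at this
      rw [Real.sq_sqrt (by positivity)] at this
      simpa using this
    have h3 : dot2 (b k • w + a k • v) w = b k * (w.1 ^ 2 + w.2 ^ 2) + a k * dot2 w v := by
      simp [dot2]; ring
    rw [h3, h2, hwv] at h1
    have := hb k
    linarith
  · have := hb0.smul hwτ
    simp only [heq]
    simpa using this
  · have h1 := (nml_cont hw0).tendsto.comp hwτ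
    have h2 : nml w = w := by simp [nml, hw]
    rw [h2] at h1
    refine h1.congr fun k => ?_
    simp only [Function.comp]
    rw [heq k]
    exact (nml_smul (hb k) _).symm

lemma cone_dichotomy (E : Set (ℝ × ℝ)) (w v : ℝ × ℝ) (hw : nrm2 w = 1) (hwv : dot2 w v = 0)
    (ht : ¬ IsTangentDirAt (frontier E) w) :
    ∃ η > (0:ℝ), (∀ a b : ℝ, 0 < b → b < η → |a| ≤ η * b → b • w + a • v ∈ E) ∨
      (∀ a b : ℝ, 0 < b → b < η → |a| ≤ η * b → b • w + a • v ∉ E) := by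
  obtain ⟨η, hη, h⟩ := cone_avoid _ w v hw hwv ht
  refine ⟨η, hη, ?_⟩
  set D : Set (ℝ × ℝ) := {q | 0 < q.2 ∧ q.2 < η ∧ |q.1| ≤ η * q.2} with hD
  have hconv : Convex ℝ D := by
    rintro ⟨a, b⟩ ⟨h1, h2, h3⟩ ⟨a', b'⟩ ⟨h1', h2', h3'⟩ s t hs ht hst
    simp only [abs_le] at h3 h3'
    simp only [hD, mem_ofPred_eq, Prod.fst_add, Prod.snd_add, Prod.smul_fst, Prod.smul_snd,
      smul_eq_mul, abs_le] at *
    have hs' : s = 1 - t := by linarith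
    subst hs'
    rcases eq_or_lt_of_le ht with rfl | ht0
    · simp only [sub_zero, one_mul, zero_mul, add_zero]
      exact ⟨h1, h2, h3⟩
    refine ⟨by nlinarith [mul_pos ht0 h1', mul_nonneg hs h1.le], ?_, ?_, ?_⟩
    · nlinarith [mul_lt_mul_of_pos_left h2' ht0, mul_le_mul_of_nonneg_left h2.le hs]
    · nlinarith [mul_le_mul_of_nonneg_left h3'.1 ht, mul_le_mul_of_nonneg_left h3.1 hs]
    · nlinarith [mul_le_mul_of_nonneg_left h3'.2 ht, mul_le_mul_of_nonneg_left h3.2 hs]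
  have hpre : IsPreconnected ((fun q : ℝ × ℝ => q.2 • w + q.1 • v) '' D) :=
    hconv.isPreconnected.image _ (by fun_prop)
  by_contra! hcon
  obtain ⟨⟨a, b, h1, h2, h3, h4⟩, ⟨a', b', h1', h2', h3', h4'⟩⟩ := hcon
  have hcover : (fun q : ℝ × ℝ => q.2 • w + q.1 • v) '' D ⊆ interior E ∪ interior Eᶜ := by
    rintro x ⟨q, hq, rfl⟩
    have hx := h _ _ hq.1 hq.2.1 hq.2.2
    by_cases hxE : q.2 • w + q.1 • v ∈ E
    · left
      by_contra hi
      exact hx ⟨subset_closure hxE, hi⟩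
    · right
      rw [interior_compl]
      intro hc
      exact hx ⟨hc, fun hi => hxE (interior_subset hi)⟩
  have m1 : b • w + a • v ∈ (fun q : ℝ × ℝ => q.2 • w + q.1 • v) '' D := ⟨(a, b), ⟨h1, h2, h3⟩, rfl⟩
  have m2 : b' • w + a' • v ∈ (fun q : ℝ × ℝ => q.2 • w + q.1 • v) '' D :=
    ⟨(a', b'), ⟨h1', h2', h3'⟩, rfl⟩
  obtain ⟨x, -, hx1, hx2⟩ := hpre _ _ isOpen_interior isOpen_interior hcover
    ⟨_, m2, (hcover m2).resolve_right fun hi => interior_subset hi h4'⟩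
    ⟨_, m1, (hcover m1).resolve_left fun hi => h4 (interior_subset hi)⟩
  exact (interior_subset hx2 : x ∈ Eᶜ) (interior_subset hx1)

lemma rpow_between (m M γ x : ℝ) (hm : 0 < m) (h1 : m ≤ x) (h2 : x ≤ M) :
    min (m ^ γ) (M ^ γ) ≤ x ^ γ ∧ x ^ γ ≤ max (m ^ γ) (M ^ γ) := by
  have hx : 0 < x := hm.trans_le h1
  rcases le_total 0 γ with h | h
  · exact ⟨(min_le_left _ _).trans (Real.rpow_le_rpow hm.le h1 h),
      (Real.rpow_le_rpow hx.le h2 h).trans (le_max_right _ _)⟩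
  · exact ⟨(min_le_right _ _).trans (Real.rpow_le_rpow_of_nonpos hx h2 h),
      (Real.rpow_le_rpow_of_nonpos hm h1 h).trans (le_max_left _ _)⟩

lemma prod_bound {n : ℕ} (f : Fin n → ℝ × ℝ → ℝ) (γ : Fin n → ℝ)
    (hf : ∀ i, AnalyticAt ℝ (f i) 0)
    (hne : ∀ i, ¬ (∀ᶠ p in 𝓝 (0 : ℝ × ℝ), f i p = 0)) (w v : ℝ × ℝ)
    (hw : ∀ i, lowestPart (f i) w ≠ 0) :
    ∃ s : ℝ, ∃ η > (0:ℝ), ∃ m > (0:ℝ), ∃ M > (0:ℝ), ∀ a b : ℝ, 0 < b → b < η → |a| ≤ η * b →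
      m * b ^ s ≤ ∏ i, |f i (b • w + a • v)| ^ γ i ∧
      ∏ i, |f i (b • w + a • v)| ^ γ i ≤ M * b ^ s := by
  choose η hη m hm M hM h using fun i => cone_bound (f i) (hf i) (hne i) w v (hw i)
  have hev : ∀ᶠ x in 𝓝[>] (0:ℝ), ∀ i, x < η i := by
    rw [Filter.eventually_all]
    intro i
    exact nhdsWithin_le_nhds (gt_mem_nhds (hη i))
  obtain ⟨x, hx, hx0⟩ := (hev.and self_mem_nhdsWithin).exists
  have hx0 : 0 < x := hx0
  refine ⟨∑ i, (vanishingOrder (f i) : ℝ) * γ i, x, hx0,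
    ∏ i, min (m i ^ γ i) (M i ^ γ i), ?_, ∏ i, max (m i ^ γ i) (M i ^ γ i), ?_, ?_⟩
  · exact Finset.prod_pos fun i _ =>
      lt_min (Real.rpow_pos_of_pos (hm i) _) (Real.rpow_pos_of_pos (hM i) _)
  · exact Finset.prod_pos fun i _ =>
      lt_max_of_lt_left (Real.rpow_pos_of_pos (hm i) _)
  · intro a b hb hbx hax
    have hsum : b ^ (∑ i, (vanishingOrder (f i) : ℝ) * γ i)
        = ∏ i, (b ^ vanishingOrder (f i)) ^ γ i := by
      rw [Real.rpow_sum_of_pos hb]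
      refine Finset.prod_congr rfl fun i _ => ?_
      rw [Real.rpow_mul hb.le, Real.rpow_natCast]
    have key : ∀ i, min (m i ^ γ i) (M i ^ γ i) * (b ^ vanishingOrder (f i)) ^ γ i
          ≤ |f i (b • w + a • v)| ^ γ i ∧
        |f i (b • w + a • v)| ^ γ i
          ≤ max (m i ^ γ i) (M i ^ γ i) * (b ^ vanishingOrder (f i)) ^ γ i := by
      intro i
      obtain ⟨h1, h2⟩ := h i a b hb (hbx.trans (hx i)) (hax.trans (by
        have := hx i
        gcongr))
      have hB : 0 < b ^ vanishingOrder (f i) := by positivity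
      obtain ⟨h3, h4⟩ := rpow_between (m i) (M i) (γ i)
        (|f i (b • w + a • v)| / b ^ vanishingOrder (f i)) (hm i)
        (by rwa [le_div_iff₀ hB]) (by rwa [div_le_iff₀ hB])
      have hBγ : 0 < (b ^ vanishingOrder (f i)) ^ γ i := Real.rpow_pos_of_pos hB _
      rw [Real.div_rpow (abs_nonneg _) hB.le] at h3 h4
      rw [le_div_iff₀ hBγ] at h3
      rw [div_le_iff₀ hBγ] at h4
      exact ⟨h3, h4⟩
    rw [hsum, ← Finset.prod_mul_distrib, ← Finset.prod_mul_distrib]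
    constructor
    · refine Finset.prod_le_prod (fun i _ => ?_) fun i _ => (key i).1
      have hm' := Real.rpow_pos_of_pos (hm i) (γ i)
      have hM' := Real.rpow_pos_of_pos (hM i) (γ i)
      exact mul_nonneg (le_min hm'.le hM'.le) (Real.rpow_nonneg (by positivity) _)
    · exact Finset.prod_le_prod (fun i _ => Real.rpow_nonneg (abs_nonneg _) _)
        fun i _ => (key i).2

lemma log_beats (K c A B : ℝ) (d : ℕ) (hK : 0 < K) (hc : 0 < c) (hAB : A < B) :
    ∀ᶠ r in 𝓝[>] (0:ℝ), c * r ^ B * |Real.log r| ^ d < K * r ^ A := by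
  have h := isLittleO_abs_log_rpow_rpow_nhdsGT_zero (s := A - B) (d : ℝ) (by linarith)
  have h2 := h.def (c := K / (2 * c)) (by positivity)
  filter_upwards [h2, self_mem_nhdsWithin] with r hr hr0
  have hr0 : 0 < r := hr0
  rw [Real.rpow_natCast, Real.norm_of_nonneg (by positivity),
    Real.norm_of_nonneg (Real.rpow_nonneg hr0.le _)] at hr
  have hB : 0 < r ^ B := Real.rpow_pos_of_pos hr0 _
  have hA : 0 < r ^ A := Real.rpow_pos_of_pos hr0 _
  have hmul : r ^ B * r ^ (A - B) = r ^ A := by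
    rw [← Real.rpow_add hr0]; congr 1; ring
  calc c * r ^ B * |Real.log r| ^ d ≤ c * r ^ B * (K / (2 * c) * r ^ (A - B)) := by gcongr
    _ = K / 2 * (r ^ B * r ^ (A - B)) := by field_simp
    _ = K / 2 * r ^ A := by rw [hmul]
    _ < K * r ^ A := by nlinarith

lemma disk2_meas (r : ℝ) : MeasurableSet (disk2 r) := by
  unfold disk2
  apply measurableSet_lt <;> fun_prop

lemma disk2_mono {r s : ℝ} (hr : 0 ≤ r) (h : r ≤ s) : disk2 r ⊆ disk2 s := by
  intro p hp
  have hp : p.1 ^ 2 + p.2 ^ 2 < r ^ 2 := hp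
  change p.1 ^ 2 + p.2 ^ 2 < s ^ 2
  nlinarith

lemma exponent_le (G : ℝ × ℝ → ℝ) (hG : ∀ p, 0 ≤ G p) (r₁ : ℝ) (hr₁ : 0 < r₁)
    (hI : IntegrableOn G (disk2 r₁)) (ε c₂ c₃ : ℝ) (d : ℕ) (hc₂ : 0 < c₂) (hc₃ : 0 < c₃)
    (hB : ∀ r, 0 < r → r < c₃ → ∫ p in disk2 r, G p ≤ c₂ * r ^ ε * |Real.log r| ^ d)
    (σ : ℝ) (hσ : σ = 1 ∨ σ = -1) (s m η : ℝ) (hm : 0 < m) (hη : 0 < η)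
    (h : ∀ a b : ℝ, 0 < b → b < η → |a| ≤ η * b → m * b ^ s ≤ G (a, σ * b)) :
    ε ≤ s + 2 := by
  by_contra! hlt
  have hσ2 : σ * σ = 1 := by rcases hσ with rfl | rfl <;> norm_num
  have hσ0 : σ ≠ 0 := by rintro rfl; norm_num at hσ2
  have hσabs : |σ| = 1 := by rcases hσ with rfl | rfl <;> norm_num
  set η' := min η 1 with hη'
  have hη'0 : 0 < η' := by positivity
  set u := min ((1/4:ℝ) ^ s) ((1/2:ℝ) ^ s) with hu
  have hu0 : 0 < u := by positivity
  have hev := log_beats (m * u * (η' / 8)) c₂ (s + 2) ε d (by positivity) hc₂ hlt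
  have hsmall : ∀ x : ℝ, 0 < x → ∀ᶠ r in 𝓝[>] (0:ℝ), r < x := fun x hx =>
    nhdsWithin_le_nhds (gt_mem_nhds hx)
  obtain ⟨r, h1, h2, h3, h4, hr⟩ := (hev.and ((hsmall r₁ hr₁).and ((hsmall c₃ hc₃).and
    ((hsmall η hη).and self_mem_nhdsWithin)))).exists
  have hr : 0 < r := hr
  set S : Set (ℝ × ℝ) := Icc (-(η' * r / 4)) (η' * r / 4) ×ˢ
    ((fun x => σ * x) ⁻¹' Ioo (r/4) (r/2)) with hS
  have hSm : MeasurableSet S :=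
    measurableSet_Icc.prod ((measurable_const_mul σ) measurableSet_Ioo)
  have hvol : volume S = ENNReal.ofReal (η' / 8 * r ^ 2) := by
    rw [hS, Measure.volume_eq_prod, Measure.prod_prod, Real.volume_Icc,
      Real.volume_preimage_mul_left hσ0, Real.volume_Ioo, abs_inv, hσabs, inv_one,
      ENNReal.ofReal_one, one_mul, ← ENNReal.ofReal_mul (by
        have : 0 < η' * r := by positivity
        linarith)]
    congr 1; ring
  have hSd : S ⊆ disk2 r := by
    rintro ⟨a, b⟩ ⟨ha, hb⟩
    simp only [mem_Icc] at ha
    simp only [mem_preimage, mem_Ioo] at hb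
    change a ^ 2 + b ^ 2 < r ^ 2
    have hb2 : b ^ 2 = (σ * b) ^ 2 := by rw [mul_pow, pow_two σ, hσ2, one_mul]
    have hη'1 : η' ≤ 1 := min_le_right _ _
    have ha' : |a| ≤ r / 4 := by
      rw [abs_le]; constructor <;> nlinarith
    have ha2 : a ^ 2 ≤ (r/4) ^ 2 := sq_le_sq' (abs_le.1 ha').1 (abs_le.1 ha').2
    rw [hb2]
    nlinarith
  have hId : IntegrableOn G (disk2 r) := hI.mono_set (disk2_mono hr.le h2.le)
  have hlow : ∀ p ∈ S, m * u * r ^ s ≤ G p := by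
    rintro ⟨a, b⟩ ⟨ha, hb⟩
    simp only [mem_Icc] at ha
    simp only [mem_preimage, mem_Ioo] at hb
    have := h a (σ * b) (by linarith) (by linarith) (by
      have hη'1 : η' ≤ η := min_le_left _ _
      rw [abs_le]
      have h5 : η' * r / 4 ≤ η * (σ * b) := by
        calc η' * r / 4 = η' * (r / 4) := by ring
          _ ≤ η * (σ * b) := by
            apply mul_le_mul hη'1 hb.1.le (by positivity) hη.le
      constructor <;> linarith)
    rw [← mul_assoc, hσ2, one_mul] at this
    refine le_trans ?_ this
    have h6 := (rpow_between (1/4) (1/2) s (σ * b / r) (by norm_num)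
      (by rw [le_div_iff₀ hr]; linarith) (by rw [div_le_iff₀ hr]; linarith)).1
    rw [Real.div_rpow (by linarith) hr.le, le_div_iff₀ (Real.rpow_pos_of_pos hr _)] at h6
    rw [mul_assoc]
    exact mul_le_mul_of_nonneg_left h6 hm.le
  have h7 : m * u * r ^ s * volume.real S ≤ ∫ p in S, G p :=
    setIntegral_ge_of_const_le_real hSm (by rw [hvol]; exact ENNReal.ofReal_ne_top) hlow
      (hId.mono_set hSd)
  have h8 : ∫ p in S, G p ≤ ∫ p in disk2 r, G p :=
    setIntegral_mono_set hId (Eventually.of_forall hG) (Eventually.of_forall hSd)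
  have h9 := hB r hr h3
  have h10 : volume.real S = η' / 8 * r ^ 2 := by
    rw [Measure.real, hvol, ENNReal.toReal_ofReal (by positivity)]
  rw [h10] at h7
  have h11 : r ^ (s + 2) = r ^ s * r ^ 2 := by
    rw [Real.rpow_add hr]; norm_num
  rw [h11] at h1
  nlinarith

lemma abs_rpow_int (q : ℝ) (hq : -1 < q) (r : ℝ) (hr : 0 < r) :
    IntegrableOn (fun x : ℝ => |x| ^ q) (Ioo (-r) r) ∧
    ∫ x in Ioo (-r) r, |x| ^ q = 2 / (q + 1) * r ^ (q + 1) := by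
  have h1 : IntervalIntegrable (fun x : ℝ => |x| ^ q) volume 0 r := by
    refine (intervalIntegral.intervalIntegrable_rpow' hq).congr ?_
    intro x hx
    rw [uIoc_of_le hr.le] at hx
    simp only []
    rw [abs_of_pos hx.1]
  have h2 : IntervalIntegrable (fun x : ℝ => |x| ^ q) volume (-r) 0 := by
    have := (IntervalIntegrable.iff_comp_neg (f := fun x : ℝ => |x| ^ q) (a := 0) (b := r)).1 h1
    simp only [abs_neg, neg_zero] at this
    exact this.symm
  have h3 := h2.trans h1
  have hrr : -r ≤ r := by linarith
  have e1 : ∫ x in (0:ℝ)..r, |x| ^ q = r ^ (q + 1) / (q + 1) := by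
    have : ∫ x in (0:ℝ)..r, |x| ^ q = ∫ x in (0:ℝ)..r, x ^ q := by
      apply intervalIntegral.integral_congr
      intro x hx
      rw [uIcc_of_le hr.le] at hx
      simp only []
      rw [abs_of_nonneg hx.1]
    rw [this, integral_rpow (Or.inl hq), Real.zero_rpow (by linarith), sub_zero]
  have e2 : ∫ x in (-r)..0, |x| ^ q = r ^ (q + 1) / (q + 1) := by
    have := intervalIntegral.integral_comp_neg (a := 0) (b := r) (fun x : ℝ => |x| ^ q)
    simp only [abs_neg, neg_zero] at this
    rw [← this, e1]
  constructor
  · exact ((intervalIntegrable_iff_integrableOn_Ioc_of_le hrr).1 h3).mono_set Ioo_subset_Ioc_self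
  · rw [← integral_Ioc_eq_integral_Ioo, ← intervalIntegral.integral_of_le hrr,
      ← intervalIntegral.integral_add_adjacent_intervals h2 h1, e1, e2]
    ring

lemma pointwise_bd (G : ℝ × ℝ → ℝ) (hG : ∀ p, 0 ≤ G p)
    (C η η' : ℝ) (hC : 0 < C) (hη'0 : 0 < η') (hη'1 : η' ≤ 1) (hη'η : η' ≤ η)
    (h : ∀ a b : ℝ, b ≠ 0 → |b| < η → |a| ≤ η * |b| → G (a, b) ≤ C * |b| ^ (-(3/2):ℝ))
    (κ : ℝ) (hκ0 : 0 < κ) (r : ℝ) (hr : 0 < r) (a b : ℝ) (hp0 : a ≠ 0) (hbη : |b| < η)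
    (har : |a| < r) :
    G (a, b) ≤ (disk2 (2 / η' * r)).indicator G (a, b)
      + C * (|a| ^ (-1/2 - κ) * |b| ^ (-1 + κ)) := by
  have hnn : 0 ≤ C * (|a| ^ (-1/2 - κ) * |b| ^ (-1 + κ)) := by positivity
  by_cases hcone : |a| ≤ η' * |b|
  · have hb0 : b ≠ 0 := by
      rintro rfl
      simp only [abs_zero, mul_zero] at hcone
      exact hp0 (abs_eq_zero.1 (le_antisymm hcone (abs_nonneg _)))
    have hbp : 0 < |b| := abs_pos.2 hb0
    have hap : 0 < |a| := abs_pos.2 hp0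
    have hG1 := h a b hb0 hbη (hcone.trans (by gcongr))
    have hsplit : |b| ^ (-(3/2):ℝ) = |b| ^ (-1/2 - κ) * |b| ^ (-1 + κ) := by
      rw [← Real.rpow_add hbp]; congr 1; ring
    have hab : |a| ≤ |b| := hcone.trans (mul_le_of_le_one_left (abs_nonneg b) hη'1)
    have hmono : |b| ^ (-1/2 - κ) ≤ |a| ^ (-1/2 - κ) :=
      Real.rpow_le_rpow_of_nonpos hap hab (by linarith)
    have hind : 0 ≤ (disk2 (2 / η' * r)).indicator G (a, b) :=
      indicator_nonneg (fun p _ => hG p) _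
    have : C * |b| ^ (-(3/2):ℝ) ≤ C * (|a| ^ (-1/2 - κ) * |b| ^ (-1 + κ)) := by
      rw [hsplit]; gcongr
    linarith
  · have hin : (a, b) ∈ disk2 (2 / η' * r) := by
      have hcone := not_le.1 hcone
      have hbr : |b| < r / η' := by rw [lt_div_iff₀ hη'0]; linarith
      have har' : |a| < r / η' := har.trans_le (by
        rw [le_div_iff₀ hη'0]; exact mul_le_of_le_one_right hr.le hη'1)
      change a ^ 2 + b ^ 2 < (2 / η' * r) ^ 2
      have e1 : 2 / η' * r = 2 * (r / η') := by ring
      rw [e1, ← sq_abs a, ← sq_abs b]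
      nlinarith [abs_nonneg a, abs_nonneg b]
    rw [indicator_of_mem hin]
    linarith

set_option maxHeartbeats 1000000 in
lemma strip_exponent (G : ℝ × ℝ → ℝ) (hG : ∀ p, 0 ≤ G p) (r₁ : ℝ) (hr₁ : 0 < r₁)
    (hI : IntegrableOn G (disk2 r₁)) (ε c₂ c₃ : ℝ) (d : ℕ) (hc₂ : 0 < c₂) (hc₃ : 0 < c₃)
    (hε : 1/2 ≤ ε)
    (hB : ∀ r, 0 < r → r < c₃ → ∫ p in disk2 r, G p ≤ c₂ * r ^ ε * |Real.log r| ^ d)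
    (C η : ℝ) (hC : 0 < C) (hη : 0 < η)
    (h : ∀ a b : ℝ, b ≠ 0 → |b| < η → |a| ≤ η * |b| → G (a, b) ≤ C * |b| ^ (-(3/2):ℝ))
    (δ : ℝ) (e : ℕ) (hδ : 0 < δ) (cv : ℝ) (hcv : 0 < cv)
    (hs : ∀ c : ℝ, 0 < c → c < cv → ∃ a > (0:ℝ), ∀ r : ℝ, 0 < r → r < c →
      a * r ^ δ * |Real.log r| ^ e ≤ ∫ p in Ioo (-r) r ×ˢ Ioo (-c) c, G p) :
    1/2 ≤ δ := by
  by_contra! hlt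
  set κ := (1/2 - δ) / 2 with hκ
  have hκ0 : 0 < κ := by linarith
  set η' := min η 1 with hη'
  have hη'0 : 0 < η' := by positivity
  have hη'1 : η' ≤ 1 := min_le_right _ _
  have hη'η : η' ≤ η := min_le_left _ _
  set c := min (min (cv/2) (η/2)) (r₁/2) with hc
  have hc0 : 0 < c := by positivity
  have hccv : c < cv := lt_of_le_of_lt ((min_le_left _ _).trans (min_le_left _ _)) (by linarith)
  have hcη : c < η := lt_of_le_of_lt ((min_le_left _ _).trans (min_le_right _ _)) (by linarith)
  have hcr : c ≤ r₁/2 := min_le_right _ _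
  obtain ⟨a₀, ha₀, hs⟩ := hs c hc0 hccv
  set q : ℝ := -1/2 - κ with hq
  set q' : ℝ := -1 + κ with hq'
  have hq1 : -1 < q := by linarith
  have hq1' : -1 < q' := by linarith
  set R := 2 / η' with hR
  have hR0 : 0 < R := by positivity
  set J := 2 / (q' + 1) * c ^ (q' + 1) with hJ
  have hJ0 : 0 < J := by
    have : 0 < q' + 1 := by linarith
    positivity
  have hqq : 0 < q + 1 := by linarith
  -- choose r
  have hsmall : ∀ x : ℝ, 0 < x → ∀ᶠ r in 𝓝[>] (0:ℝ), r < x := fun x hx =>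
    nhdsWithin_le_nhds (gt_mem_nhds hx)
  have hev1 := log_beats (a₀ / 3) (C * (2 / (q + 1) * J)) δ (q + 1) 0 (by positivity)
    (by positivity) (by linarith)
  have hev2' := log_beats (a₀ / 3 / R ^ δ) c₂ δ ε d (by positivity) hc₂ (by linarith)
  have hRt : Tendsto (fun r : ℝ => R * r) (𝓝[>] 0) (𝓝[>] 0) := by
    apply tendsto_nhdsWithin_iff.2
    constructor
    · have : Continuous (fun r : ℝ => R * r) := by fun_prop
      have h2 := this.tendsto 0
      rw [mul_zero] at h2
      exact h2.mono_left nhdsWithin_le_nhds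
    · filter_upwards [self_mem_nhdsWithin] with r hr
      exact mul_pos hR0 hr
  have hev2 := hRt.eventually hev2'
  obtain ⟨r, h1, h2, h3, h4, h5, h6, hr⟩ := (hev1.and (hev2.and ((hsmall c hc0).and
    ((hsmall (c₃ / R) (by positivity)).and ((hsmall (r₁ / R) (by positivity)).and
    ((hsmall (Real.exp (-1)) (Real.exp_pos _)).and self_mem_nhdsWithin)))))).exists
  have hr : 0 < r := hr
  have hRr : 0 < R * r := by positivity
  rw [lt_div_iff₀ hR0] at h4 h5
  have hlow := hs r hr h3
  have hlog : 1 ≤ |Real.log r| := by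
    have : Real.log r < -1 := by rwa [Real.log_lt_iff_lt_exp hr]
    rw [abs_of_neg (by linarith)]; linarith
  have hlow2 : a₀ * r ^ δ ≤ ∫ p in Ioo (-r) r ×ˢ Ioo (-c) c, G p := by
    refine le_trans ?_ hlow
    have : 0 ≤ a₀ * r ^ δ := by positivity
    exact le_mul_of_one_le_right this (one_le_pow₀ hlog)
  have hball := hB (R * r) hRr (by linarith)
  set Bx : Set (ℝ × ℝ) := Ioo (-r) r ×ˢ Ioo (-c) c with hBx
  have hBm : MeasurableSet Bx := measurableSet_Ioo.prod measurableSet_Ioo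
  have hBd : Bx ⊆ disk2 r₁ := by
    rintro ⟨a, b⟩ ⟨ha, hb⟩
    simp only [mem_Ioo] at ha hb
    change a ^ 2 + b ^ 2 < r₁ ^ 2
    have ha2 : a ^ 2 ≤ c ^ 2 := sq_le_sq' (by linarith) (by linarith)
    have hb2 : b ^ 2 ≤ c ^ 2 := sq_le_sq' (by linarith) (by linarith)
    nlinarith
  have hIB : IntegrableOn G Bx := hI.mono_set hBd
  have hID : IntegrableOn G (disk2 (R * r)) := hI.mono_set (disk2_mono hRr.le (by linarith))
  obtain ⟨i1, i2⟩ := abs_rpow_int q hq1 r hr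
  obtain ⟨j1, j2⟩ := abs_rpow_int q' hq1' c hc0
  have hprodI : IntegrableOn (fun p : ℝ × ℝ => |p.1| ^ q * |p.2| ^ q') Bx := by
    have := Integrable.mul_prod i1 j1
    rw [Measure.prod_restrict, ← Measure.volume_eq_prod] at this
    exact this
  have hprod : ∫ p in Bx, |p.1| ^ q * |p.2| ^ q' = 2 / (q + 1) * r ^ (q + 1) * J := by
    have := setIntegral_prod_mul (μ := (volume : Measure ℝ)) (ν := (volume : Measure ℝ))
      (fun x : ℝ => |x| ^ q) (fun x : ℝ => |x| ^ q') (Ioo (-r) r) (Ioo (-c) c)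
    rw [i2, j2, ← Measure.volume_eq_prod] at this
    exact this
  have hne : ∀ᵐ p : ℝ × ℝ ∂(volume.restrict Bx), p.1 ≠ 0 := by
    apply ae_restrict_of_ae
    have h0 : ∀ᵐ x : ℝ, x ≠ 0 := by
      simp [ae_iff, measure_singleton]
    exact (Measure.quasiMeasurePreserving_fst (μ := (volume : Measure ℝ))
      (ν := (volume : Measure ℝ))).ae h0
  have hle : ∫ p in Bx, G p ≤ ∫ p in Bx, ((disk2 (R * r)).indicator G p
      + C * (|p.1| ^ q * |p.2| ^ q')) := by
    apply integral_mono_ae hIB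
    · exact (hIB.indicator (disk2_meas _)).add (hprodI.const_mul C)
    · filter_upwards [hne, ae_restrict_mem hBm] with p hp0 hp
      obtain ⟨a, b⟩ := p
      obtain ⟨ha, hb⟩ := hp
      simp only [mem_Ioo] at ha hb
      simp only at hp0 ⊢
      exact pointwise_bd G hG C η η' hC hη'0 hη'1 hη'η h κ hκ0 r hr a b hp0
        ((abs_lt.2 hb).trans hcη) (abs_lt.2 ha)
  have hsum : ∫ p in Bx, ((disk2 (R * r)).indicator G p + C * (|p.1| ^ q * |p.2| ^ q'))
      ≤ (∫ p in disk2 (R * r), G p) + C * (2 / (q + 1) * r ^ (q + 1) * J) := by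
    rw [integral_add (hIB.indicator (disk2_meas _)) (hprodI.const_mul C), integral_const_mul,
      hprod]
    have h8 : ∫ p in Bx, (disk2 (R * r)).indicator G p ≤ ∫ p in disk2 (R * r), G p := by
      rw [setIntegral_indicator (disk2_meas _)]
      exact setIntegral_mono_set hID (Eventually.of_forall hG)
        (Eventually.of_forall inter_subset_right)
    linarith
  rw [pow_zero, mul_one] at h1
  rw [Real.mul_rpow hR0.le hr.le (z := δ), ← mul_assoc,
    div_mul_cancel₀ _ (Real.rpow_pos_of_pos hR0 δ).ne'] at h2
  have h9 : C * (2 / (q + 1) * r ^ (q + 1) * J) = C * (2 / (q + 1) * J) * r ^ (q + 1) := by ring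
  have h10 : 0 < a₀ * r ^ δ := by positivity
  rw [h9] at hsum
  linarith

/-- reflection taking standard coordinates to the frame `v, v^⊥` -/
def refl2 (v : ℝ × ℝ) : ℝ × ℝ →ₗ[ℝ] ℝ × ℝ where
  toFun q := (q.1 * v.1 + q.2 * v.2, q.1 * v.2 - q.2 * v.1)
  map_add' p q := by ext <;> simp <;> ring
  map_smul' c q := by ext <;> simp <;> ring

lemma sq_of_nrm2 {v : ℝ × ℝ} (hv : nrm2 v = 1) : v.1 ^ 2 + v.2 ^ 2 = 1 := by
  have := congrArg (· ^ 2) hv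
  simp only [nrm2] at this
  rw [Real.sq_sqrt (by positivity)] at this
  simpa using this

lemma refl2_apply (v q : ℝ × ℝ) :
    refl2 v q = (q.1 * v.1 + q.2 * v.2, q.1 * v.2 - q.2 * v.1) := rfl

lemma refl2_refl2 {v : ℝ × ℝ} (hv : nrm2 v = 1) (q : ℝ × ℝ) : refl2 v (refl2 v q) = q := by
  have h := sq_of_nrm2 hv
  rw [refl2_apply, refl2_apply]
  ext
  · simp only []
    linear_combination q.1 * h
  · simp only []
    linear_combination q.2 * h

lemma refl2_cont (v : ℝ × ℝ) : Continuous (refl2 v) := by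
  have : (refl2 v : ℝ × ℝ → ℝ × ℝ)
    = fun q => (q.1 * v.1 + q.2 * v.2, q.1 * v.2 - q.2 * v.1) := rfl
  rw [this]; fun_prop

lemma refl2_mp {v : ℝ × ℝ} (hv : nrm2 v = 1) :
    MeasurePreserving (refl2 v) (volume : Measure (ℝ × ℝ)) volume := by
  refine ⟨(refl2_cont v).measurable, ?_⟩
  have hcomp : (refl2 v).comp (refl2 v) = LinearMap.id := LinearMap.ext (refl2_refl2 hv)
  have hdet : LinearMap.det (refl2 v) * LinearMap.det (refl2 v) = 1 := by
    rw [← LinearMap.det_comp, hcomp, LinearMap.det_id]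
  have h0 : LinearMap.det (refl2 v) ≠ 0 := by
    intro h0; rw [h0] at hdet; norm_num at hdet
  have h1 : |(LinearMap.det (refl2 v))⁻¹| = 1 := by
    rcases mul_self_eq_one_iff.1 hdet with h | h <;> rw [h] <;> norm_num
  rw [Measure.map_linearMap_addHaar_eq_smul_addHaar volume h0, h1]
  simp

lemma refl2_emb {v : ℝ × ℝ} (hv : nrm2 v = 1) : MeasurableEmbedding (refl2 v) := by
  let e : (ℝ × ℝ) ≃ₜ (ℝ × ℝ) :=
    { toFun := refl2 v, invFun := refl2 v, left_inv := refl2_refl2 hv,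
      right_inv := refl2_refl2 hv,
      continuous_toFun := refl2_cont v, continuous_invFun := refl2_cont v }
  exact e.measurableEmbedding

lemma refl2_disk {v : ℝ × ℝ} (hv : nrm2 v = 1) (r : ℝ) : refl2 v ⁻¹' disk2 r = disk2 r := by
  have h := sq_of_nrm2 hv
  ext q
  change (q.1 * v.1 + q.2 * v.2) ^ 2 + (q.1 * v.2 - q.2 * v.1) ^ 2 < r ^ 2 ↔
    q.1 ^ 2 + q.2 ^ 2 < r ^ 2
  rw [show (q.1 * v.1 + q.2 * v.2) ^ 2 + (q.1 * v.2 - q.2 * v.1) ^ 2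
    = (q.1 ^ 2 + q.2 ^ 2) * (v.1 ^ 2 + v.2 ^ 2) by ring, h, mul_one]

lemma refl2_strip {v : ℝ × ℝ} (hv : nrm2 v = 1) (r c : ℝ) :
    refl2 v ⁻¹' strip2 v r c = Ioo (-r) r ×ˢ Ioo (-c) c := by
  have h := sq_of_nrm2 hv
  ext q
  change |dot2 (refl2 v q) v| < r ∧ |dot2 (refl2 v q) (perp2 v)| < c ↔
    q.1 ∈ Ioo (-r) r ∧ q.2 ∈ Ioo (-c) c
  have h1 : dot2 (refl2 v q) v = q.1 := by
    rw [refl2_apply, dot2]; linear_combination q.1 * h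
  have h2 : dot2 (refl2 v q) (perp2 v) = q.2 := by
    rw [refl2_apply, dot2, perp2]; linear_combination q.2 * h
  rw [h1, h2, abs_lt, abs_lt]
  rfl

lemma refl2_integral {v : ℝ × ℝ} (hv : nrm2 v = 1) (g : ℝ × ℝ → ℝ) (S : Set (ℝ × ℝ)) :
    ∫ p in refl2 v ⁻¹' S, g (refl2 v p) = ∫ p in S, g p :=
  (refl2_mp hv).setIntegral_preimage_emb (refl2_emb hv) g S

lemma disk2_subset_of_nhds (U : Set (ℝ × ℝ)) (hU : U ∈ 𝓝 (0 : ℝ × ℝ)) :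
    ∃ r > (0:ℝ), disk2 r ⊆ U := by
  obtain ⟨r, hr, hrU⟩ := Metric.mem_nhds_iff.1 hU
  refine ⟨r, hr, fun p hp => hrU ?_⟩
  have hp : p.1 ^ 2 + p.2 ^ 2 < r ^ 2 := hp
  rw [mem_ball_zero_iff, Prod.norm_def, max_lt_iff, Real.norm_eq_abs, Real.norm_eq_abs]
  constructor
  · exact abs_lt_of_sq_lt_sq (by nlinarith [sq_nonneg p.2]) hr.le
  · exact abs_lt_of_sq_lt_sq (by nlinarith [sq_nonneg p.1]) hr.le

lemma stdFun_nonneg (n : ℕ) (f : Fin n → ℝ × ℝ → ℝ) (γ : Fin n → ℝ) (E : Set (ℝ × ℝ))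
    (p : ℝ × ℝ) : 0 ≤ stdFun n f γ E p :=
  indicator_nonneg (fun _ _ => Finset.prod_nonneg fun _ _ => Real.rpow_nonneg (abs_nonneg _) _) _

lemma half_cone {n : ℕ} (f : Fin n → ℝ × ℝ → ℝ) (γ : Fin n → ℝ) (E : Set (ℝ × ℝ))
    (hf : ∀ i, AnalyticAt ℝ (f i) 0)
    (hne : ∀ i, ¬ (∀ᶠ p in 𝓝 (0 : ℝ × ℝ), f i p = 0))
    (v : ℝ × ℝ) (hv : nrm2 v = 1) (σ : ℝ) (hσ : σ = 1 ∨ σ = -1)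
    (hw : ∀ i, lowestPart (f i) (σ • perp2 v) ≠ 0)
    (ht : ¬ IsTangentDirAt (frontier E) (σ • perp2 v))
    (r₁ : ℝ) (hr₁ : 0 < r₁)
    (hI : IntegrableOn (fun q => stdFun n f γ E (refl2 v q)) (disk2 r₁))
    (ε c₂ c₃ : ℝ) (d : ℕ) (hc₂ : 0 < c₂) (hc₃ : 0 < c₃) (hε : 1/2 ≤ ε)
    (hB : ∀ r, 0 < r → r < c₃ →
      ∫ p in disk2 r, stdFun n f γ E (refl2 v p) ≤ c₂ * r ^ ε * |Real.log r| ^ d) :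
    ∃ η > (0:ℝ), ∃ C > (0:ℝ), ∀ a b : ℝ, 0 < b → b < η → |a| ≤ η * b →
      stdFun n f γ E (refl2 v (a, σ * b)) ≤ C * b ^ (-(3/2):ℝ) := by
  have hsq := sq_of_nrm2 hv
  have hσ2 : σ ^ 2 = 1 := by rcases hσ with rfl | rfl <;> norm_num
  have hwn : nrm2 (σ • perp2 v) = 1 := by
    have : (σ • perp2 v).1 ^ 2 + (σ • perp2 v).2 ^ 2 = 1 := by
      simp only [perp2, Prod.smul_fst, Prod.smul_snd, smul_eq_mul]
      linear_combination (v.1 ^ 2 + v.2 ^ 2) * hσ2 + hsq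
    rw [nrm2, this, Real.sqrt_one]
  have hwv : dot2 (σ • perp2 v) v = 0 := by
    simp only [dot2, perp2, Prod.smul_fst, Prod.smul_snd, smul_eq_mul]; ring
  have hpt : ∀ a b : ℝ, refl2 v (a, σ * b) = b • (σ • perp2 v) + a • v := by
    intro a b
    rw [refl2_apply]
    ext
    · simp [perp2]; ring
    · simp [perp2]; ring
  obtain ⟨s, η₁, hη₁, m, hm, M, hM, h1⟩ := prod_bound f γ hf hne (σ • perp2 v) v hw
  obtain ⟨η₂, hη₂, h2⟩ := cone_dichotomy E (σ • perp2 v) v hwn hwv ht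
  set η := min (min η₁ η₂) 1 with hη
  have hη0 : 0 < η := by positivity
  have e1 : η ≤ η₁ := (min_le_left _ _).trans (min_le_left _ _)
  have e2 : η ≤ η₂ := (min_le_left _ _).trans (min_le_right _ _)
  have e3 : η ≤ 1 := min_le_right _ _
  refine ⟨η, hη0, M, hM, ?_⟩
  rcases h2 with h2 | h2
  · have hval : ∀ a b : ℝ, 0 < b → b < η → |a| ≤ η * b →
        stdFun n f γ E (refl2 v (a, σ * b))
          = ∏ i, |f i (b • (σ • perp2 v) + a • v)| ^ γ i := by
      intro a b hb hbη ha
      rw [hpt, stdFun, indicator_of_mem]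
      exact h2 a b hb (hbη.trans_le e2) (ha.trans (by gcongr))
    have hexp : ε ≤ s + 2 := by
      refine exponent_le _ (fun q => stdFun_nonneg n f γ E (refl2 v q)) r₁ hr₁ hI ε c₂ c₃ d
        hc₂ hc₃ hB σ hσ s m η hm hη0 ?_
      intro a b hb hbη ha
      rw [hval a b hb hbη ha]
      exact (h1 a b hb (hbη.trans_le e1) (ha.trans (by gcongr))).1
    intro a b hb hbη ha
    rw [hval a b hb hbη ha]
    refine (h1 a b hb (hbη.trans_le e1) (ha.trans (by gcongr))).2.trans ?_
    apply mul_le_mul_of_nonneg_left _ hM.le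
    exact Real.rpow_le_rpow_of_exponent_ge hb (hbη.le.trans e3) (by linarith)
  · intro a b hb hbη ha
    rw [hpt, stdFun, indicator_of_notMem]
    · positivity
    · exact h2 a b hb (hbη.trans_le e2) (ha.trans (by gcongr))

lemma good_dir {n : ℕ} (f : Fin n → ℝ × ℝ → ℝ)
    (γ : Fin n → ℝ) (E : Set (ℝ × ℝ)) (hsf : StandardForm n f γ E)
    (ε : ℝ) (d : ℕ) (hball : BallBound (stdFun n f γ E) ε d) (hε : 1/2 ≤ ε)
    (v : ℝ × ℝ) (hv : nrm2 v = 1) (δ : ℝ) (e : ℕ)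
    (hstrip : StripBound (stdFun n f γ E) v δ e)
    (hex : ¬ ExceptionalDir n f E (perp2 v)) : 1/2 ≤ δ := by
  obtain ⟨U, hU, hfU⟩ := hsf.analytic
  have hf : ∀ i, AnalyticAt ℝ (f i) 0 := fun i => hfU i 0 (mem_of_mem_nhds hU)
  obtain ⟨U', hU', hint⟩ := hsf.integ
  obtain ⟨r₁, hr₁, hrU⟩ := disk2_subset_of_nhds U' hU'
  obtain ⟨-, -, c₁, -, c₂, hc₂, c₃, hc₃, hb⟩ := hball
  obtain ⟨hδ, -, cv, hcv, hs⟩ := hstrip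
  have hI : IntegrableOn (fun q => stdFun n f γ E (refl2 v q)) (disk2 r₁) := by
    have := ((refl2_mp hv).integrableOn_comp_preimage (refl2_emb hv)
      (f := stdFun n f γ E) (s := disk2 r₁)).2 (hint.mono_set hrU)
    rw [refl2_disk hv] at this
    exact this
  have hB : ∀ r, 0 < r → r < c₃ →
      ∫ p in disk2 r, stdFun n f γ E (refl2 v p) ≤ c₂ * r ^ ε * |Real.log r| ^ d := by
    intro r hr hr3
    have := refl2_integral hv (stdFun n f γ E) (disk2 r)
    rw [refl2_disk hv] at this
    rw [this]
    exact (hb r hr hr3).2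
  have hex' : (∀ i, lowestPart (f i) (perp2 v) ≠ 0) ∧
      ¬ IsTangentDirAt (frontier E) (perp2 v) := by
    refine ⟨fun i hi => hex (Or.inl ⟨i, hi⟩), fun h => hex (Or.inr h)⟩
  obtain ⟨η₁, hη₁, C₁, hC₁, k1⟩ := half_cone f γ E hf hsf.nontriv v hv 1 (Or.inl rfl)
    (by simpa using hex'.1) (by simpa using hex'.2) r₁ hr₁ hI ε c₂ c₃ d hc₂ hc₃ hε hB
  obtain ⟨η₂, hη₂, C₂, hC₂, k2⟩ := half_cone f γ E hf hsf.nontriv v hv (-1) (Or.inr rfl)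
    (by
      intro i
      rw [lowestPart_smul]
      exact mul_ne_zero (pow_ne_zero _ (by norm_num)) (hex'.1 i))
    (by
      rintro ⟨p, hp, hp0, h⟩
      refine hex'.2 ⟨p, hp, hp0, ?_⟩
      simp only [neg_smul, one_smul, neg_neg] at h
      exact h.symm) r₁ hr₁ hI ε c₂ c₃ d hc₂ hc₃ hε hB
  refine strip_exponent (fun q => stdFun n f γ E (refl2 v q))
    (fun q => stdFun_nonneg n f γ E (refl2 v q)) r₁ hr₁ hI ε c₂ c₃ d hc₂ hc₃ hε hB
    (max C₁ C₂) (min η₁ η₂) (by positivity) (by positivity) ?_ δ e hδ cv hcv ?_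
  · intro a b hb0 hbη ha
    have hbp : 0 < |b| := abs_pos.2 hb0
    have hpw : 0 ≤ |b| ^ (-(3/2):ℝ) := by positivity
    rcases lt_or_gt_of_ne hb0 with h | h
    · have := k2 a |b| hbp (hbη.trans_le (min_le_right _ _)) (ha.trans (by
        gcongr; exact min_le_right _ _))
      rw [show (-1:ℝ) * |b| = b by rw [abs_of_neg h]; ring] at this
      exact this.trans (mul_le_mul_of_nonneg_right (le_max_right _ _) hpw)
    · have := k1 a |b| hbp (hbη.trans_le (min_le_left _ _)) (ha.trans (by
        gcongr; exact min_le_left _ _))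
      rw [show (1:ℝ) * |b| = b by rw [abs_of_pos h]; ring] at this
      exact this.trans (mul_le_mul_of_nonneg_right (le_max_left _ _) hpw)
  · intro c hc hccv
    obtain ⟨a, ha, b, -, h⟩ := hs c hc hccv
    refine ⟨a, ha, fun r hr hrc => ?_⟩
    have := refl2_integral hv (stdFun n f γ E) (strip2 v r c)
    rw [refl2_strip hv] at this
    rw [this]
    exact (h r hr hrc).1

/-- **Theorem 1.4 a), first part.** In the local multiplier setup with ball exponent
`ε ≥ 1/2`, there are at most finitely many unit directions `v` whose strip exponent `δ_v`
is less than `1/2`, and each such direction is perpendicular to one of the lines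
`l₁, …, l_p`. -/
theorem finitely_many_bad_directions {n : ℕ} (f : Fin n → ℝ × ℝ → ℝ)
    (γ : Fin n → ℝ) (E : Set (ℝ × ℝ)) (hsf : StandardForm n f γ E)
    (ε : ℝ) (d : ℕ) (hball : BallBound (stdFun n f γ E) ε d) (hε : 1/2 ≤ ε)
    (δ : ℝ × ℝ → ℝ) (e : ℝ × ℝ → ℕ)
    (hstrip : ∀ v : ℝ × ℝ, nrm2 v = 1 → StripBound (stdFun n f γ E) v (δ v) (e v)) :
    {v : ℝ × ℝ | nrm2 v = 1 ∧ δ v < 1/2}.Finite ∧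
      ∀ v : ℝ × ℝ, nrm2 v = 1 → δ v < 1/2 → ExceptionalDir n f E (perp2 v) := by
  have hbad : ∀ v : ℝ × ℝ, nrm2 v = 1 → δ v < 1/2 → ExceptionalDir n f E (perp2 v) := by
    intro v hv hδ
    by_contra hex
    have := good_dir f γ E hsf ε d hball hε v hv (δ v) (e v) (hstrip v hv) hex
    linarith
  refine ⟨?_, hbad⟩
  obtain ⟨U, hU, hfU⟩ := hsf.analytic
  have hf : ∀ i, AnalyticAt ℝ (f i) 0 := fun i => hfU i 0 (mem_of_mem_nhds hU)
  have hfin : ((⋃ i, {w : ℝ × ℝ | nrm2 w = 1 ∧ lowestPart (f i) w = 0}) ∪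
      {w | IsTangentDirAt (frontier E) w}).Finite :=
    (Set.finite_iUnion fun i => finite_zero_dirs (f i) (hf i) (hsf.nontriv i)).union
      (finite_tangent E hsf.domain)
  have hinj : Function.Injective perp2 := by
    intro p q hpq
    simp only [perp2, Prod.mk.injEq, neg_inj] at hpq
    exact Prod.ext hpq.2 hpq.1
  refine (hfin.preimage hinj.injOn).subset ?_
  rintro v ⟨hv, hδ⟩
  have hn : nrm2 (perp2 v) = 1 := by
    rw [← hv]; simp only [nrm2, perp2]; congr 1; ring
  rcases hbad v hv hδ with ⟨i, hi⟩ | h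
  · exact Or.inl (mem_iUnion.2 ⟨i, hn, hi⟩)
  · exact Or.inr h
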